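/- arXiv:math/0502016 — 3 statements merged into one kernel-verified Lean document; each statement's English description precedes it below -/
import Mathlib

section
/- Let s ∈ ℂ with Re s > 1/2, and let f, h : (0,1) → ℂ be bounded measurable functions. Then ∫₀¹ f(x) · (Σ_{k=1}^∞ (x+k)^{−2s} h(1/(x+k))) dx = ∫₀¹ f(T(x)) · x^{2s−2} h(x) dx, where both integrals are with respect to Lebesgue measure on (0,1), the series converges absolutely for every x ∈ (0,1), and for t > 0 and w ∈ ℂ the power t^w denotes exp(w · log t). In other words, the transfer operator L_s defined by (L_s h)(x) = Σ_{k=1}^∞ (x+k)^{−2s} h(1/(x+k)) is dual to the action f ↦ (f∘T)·x^{2s−2} of the Gauss shift on (1−s)-densities. -/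
/-!
The inverse branches `x ↦ 1 / (x + k)`, `k ≥ 1`, of the Gauss map carry `(0,1)` onto disjoint
intervals that fill `(0,1)` up to the countable set of reciprocals of integers. On the `k`-th
interval the substitution `x = 1 / (y + k)` has Jacobian `(y + k)⁻²`, which together with the factor
`x ^ (2 s - 2)` gives `(y + k) ^ (-2 s)`, while `T x = y`; summing over `k` gives the identity. For
`f` integrable and `|h| ≤ C`, the sum and the integrals may be exchanged because the `k`-th integral
is at most `C k ^ (-2 Re s) ∫ |f|` in absolute value.
-/

open MeasureTheory Set

/-- The Gauss continued-fraction shift `T(x) = 1/x - ⌊1/x⌋`. -/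
noncomputable def gaussMap (x : ℝ) : ℝ := 1 / x - ⌊1 / x⌋

section PiecewiseChangeOfVariables

variable {E ι : Type*} [NormedAddCommGroup E] [NormedSpace ℝ E] [Countable ι]

theorem setIntegral_tsum_abs_deriv_smul_comp {s t : Set ℝ} {φ φ' : ι → ℝ → ℝ} {g : ℝ → E}
    (hs : MeasurableSet s) (hφ' : ∀ i, ∀ x ∈ s, HasDerivWithinAt (φ i) (φ' i x) s x)
    (hφ : ∀ i, InjOn (φ i) s) (hdisj : Pairwise (Function.onFun Disjoint fun i => φ i '' s))
    (hcover : (⋃ i, φ i '' s) =ᵐ[volume] t)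
    (hint : ∀ i, IntegrableOn (fun x => |φ' i x| • g (φ i x)) s)
    (hsum : Summable fun i => ∫ x in s, ‖|φ' i x| • g (φ i x)‖) :
    ∫ x in s, ∑' i, |φ' i x| • g (φ i x) = ∫ x in t, g x := by
  have hmeas (i : ι) : MeasurableSet (φ i '' s) :=
    hs.image_of_continuousOn_injOn (fun x hx => (hφ' i x hx).continuousWithinAt) (hφ i)
  have hint_image (i : ι) : IntegrableOn g (φ i '' s) :=
    (integrableOn_image_iff_integrableOn_abs_deriv_smul hs (hφ' i) (hφ i) g).2 (hint i)
  have hsum_image : Summable fun i => ∫ x in φ i '' s, ‖g x‖ := by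
    simpa only [integral_image_eq_integral_abs_deriv_smul hs (hφ' _) (hφ _), norm_smul,
      Real.norm_eq_abs, abs_abs, smul_eq_mul] using hsum
  calc ∫ x in s, ∑' i, |φ' i x| • g (φ i x)
      = ∑' i, ∫ x in s, |φ' i x| • g (φ i x) :=
        (integral_tsum_of_summable_integral_norm hint hsum).symm
    _ = ∑' i, ∫ x in φ i '' s, g x := by
        simp only [integral_image_eq_integral_abs_deriv_smul hs (hφ' _) (hφ _)]
    _ = ∫ x in ⋃ i, φ i '' s, g x :=
        (integral_iUnion hmeas hdisj
          (integrableOn_iUnion_of_summable_integral_norm hint_image hsum_image)).symm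
    _ = ∫ x in t, g x := setIntegral_congr_set hcover

end PiecewiseChangeOfVariables

/-- The inverse branches of the Gauss map, indexed from `0`: the `k`-th one inverts `gaussMap` on
`(1 / (k + 2), 1 / (k + 1))`. -/
noncomputable def gaussBranch (k : ℕ) (x : ℝ) : ℝ := 1 / (x + ((k : ℝ) + 1))

section GaussBranch

variable {k : ℕ} {x : ℝ}

theorem gaussBranch_mem_Ioo (hx : 0 < x) : gaussBranch k x ∈ Ioo (0 : ℝ) 1 := by
  have hlt : 1 < x + ((k : ℝ) + 1) := by linarith [k.cast_nonneg (α := ℝ)]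
  exact ⟨one_div_pos.2 (one_pos.trans hlt), (div_lt_one (one_pos.trans hlt)).2 hlt⟩

theorem floor_one_div_gaussBranch (hx : x ∈ Ico (0 : ℝ) 1) :
    ⌊1 / gaussBranch k x⌋ = (k : ℤ) + 1 := by
  rw [gaussBranch, one_div_one_div, Int.floor_eq_iff]
  push_cast
  constructor <;> linarith [hx.1, hx.2]

theorem gaussMap_gaussBranch (hx : x ∈ Ico (0 : ℝ) 1) : gaussMap (gaussBranch k x) = x := by
  rw [gaussMap, floor_one_div_gaussBranch hx, gaussBranch, one_div_one_div]
  push_cast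
  ring

theorem one_div_gaussBranch_sub (k : ℕ) (x : ℝ) : 1 / gaussBranch k x - ((k : ℝ) + 1) = x := by
  rw [gaussBranch, one_div_one_div, add_sub_cancel_right]

theorem gaussBranch_injective (k : ℕ) : Function.Injective (gaussBranch k) :=
  Function.LeftInverse.injective (g := fun y => 1 / y - ((k : ℝ) + 1)) (one_div_gaussBranch_sub k)

theorem hasDerivAt_gaussBranch (hx : x + ((k : ℝ) + 1) ≠ 0) :
    HasDerivAt (gaussBranch k) (-1 / (x + ((k : ℝ) + 1)) ^ 2) x := by
  have hinv := ((hasDerivAt_id' x).add_const ((k : ℝ) + 1)).fun_inv hx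
  simpa only [gaussBranch.eq_unfold, one_div] using hinv

theorem pairwise_disjoint_image_gaussBranch :
    Pairwise (Function.onFun Disjoint fun k => gaussBranch k '' Ico (0 : ℝ) 1) := by
  intro i j hij
  refine Set.disjoint_left.2 ?_
  rintro _ ⟨x, hx, rfl⟩ ⟨y, hy, hxy⟩
  have hfloor := floor_one_div_gaussBranch (k := i) hx
  rw [← hxy, floor_one_div_gaussBranch hy] at hfloor
  omega

theorem mem_iUnion_image_gaussBranch (hx : x ∈ Ioo (0 : ℝ) 1)
    (hinv : x ∉ range fun n : ℤ => 1 / (n : ℝ)) :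
    x ∈ ⋃ k, gaussBranch k '' Ioo (0 : ℝ) 1 := by
  have hfloor : 1 ≤ ⌊1 / x⌋ := Int.le_floor.2 (by exact_mod_cast (one_le_div hx.1).2 hx.2.le)
  obtain ⟨k, hk⟩ := Int.exists_add_of_le hfloor
  have hne : (⌊1 / x⌋ : ℝ) ≠ 1 / x := fun h => hinv ⟨⌊1 / x⌋, by simp only [h, one_div_one_div]⟩
  have hk' : (⌊1 / x⌋ : ℝ) = k + 1 := by rw [hk]; push_cast; ring
  refine mem_iUnion.2 ⟨k, 1 / x - (k + 1), ⟨?_, ?_⟩, ?_⟩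
  · linarith [(Int.floor_le (1 / x)).lt_of_ne hne]
  · linarith [Int.lt_floor_add_one (1 / x)]
  · rw [gaussBranch, sub_add_cancel, one_div_one_div]

theorem iUnion_image_gaussBranch_ae_eq :
    (⋃ k, gaussBranch k '' Ioo (0 : ℝ) 1) =ᵐ[volume] Ioo (0 : ℝ) 1 := by
  have hsubset : (⋃ k, gaussBranch k '' Ioo (0 : ℝ) 1) ⊆ Ioo 0 1 :=
    iUnion_subset fun _ => image_subset_iff.2 fun _ hx => gaussBranch_mem_Ioo hx.1
  have hnull : volume (range fun n : ℤ => 1 / (n : ℝ)) = 0 := (countable_range _).measure_zero _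
  refine hsubset.eventuallyLE.antisymm ?_
  filter_upwards [compl_mem_ae_iff.2 hnull] with x hinv hx
  exact mem_iUnion_image_gaussBranch hx hinv

theorem quasiMeasurePreserving_gaussBranch (k : ℕ) :
    Measure.QuasiMeasurePreserving (gaussBranch k) (volume.restrict (Ioo 0 1))
      (volume.restrict (Ioo 0 1)) := by
  have hmeas : Measurable (gaussBranch k) := by unfold gaussBranch; fun_prop
  refine ⟨hmeas, Measure.AbsolutelyContinuous.mk fun N hN hnull => ?_⟩
  rw [Measure.restrict_apply hN] at hnull
  rw [Measure.map_apply hmeas hN, Measure.restrict_apply (hmeas hN)]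
  have hdiff : DifferentiableOn ℝ (fun y : ℝ => 1 / y - ((k : ℝ) + 1)) (N ∩ Ioo 0 1) :=
    fun y hy => (((differentiableAt_const 1).fun_div differentiableAt_id hy.2.1.ne').sub_const
      _).differentiableWithinAt
  refine measure_mono_null ?_
    (addHaar_image_eq_zero_of_differentiableOn_of_addHaar_eq_zero volume hdiff hnull)
  rintro x ⟨hxN, hx⟩
  exact ⟨gaussBranch k x, ⟨hxN, gaussBranch_mem_Ioo hx.1⟩, one_div_gaussBranch_sub k x⟩

theorem setIntegral_tsum_inv_sq_smul_gaussBranch {E : Type*} [NormedAddCommGroup E]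
    [NormedSpace ℝ E] {g : ℝ → E}
    (hint : ∀ k : ℕ, IntegrableOn (fun x => ((x + ((k : ℝ) + 1)) ^ 2)⁻¹ • g (gaussBranch k x))
      (Ioo 0 1))
    (hsum : Summable fun k : ℕ =>
      ∫ x in Ioo (0 : ℝ) 1, ‖((x + ((k : ℝ) + 1)) ^ 2)⁻¹ • g (gaussBranch k x)‖) :
    ∫ x in Ioo (0 : ℝ) 1, ∑' k : ℕ, ((x + ((k : ℝ) + 1)) ^ 2)⁻¹ • g (gaussBranch k x)
      = ∫ x in Ioo (0 : ℝ) 1, g x := by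
  have habs (k : ℕ) (x : ℝ) : |-1 / (x + ((k : ℝ) + 1)) ^ 2| = ((x + ((k : ℝ) + 1)) ^ 2)⁻¹ := by
    rw [abs_div, abs_neg, abs_one, abs_sq, one_div]
  simp only [← habs] at hint hsum ⊢
  refine setIntegral_tsum_abs_deriv_smul_comp measurableSet_Ioo (fun k x hx => ?_)
    (fun k => (gaussBranch_injective k).injOn) ?_ iUnion_image_gaussBranch_ae_eq hint hsum
  · have hpos : 0 < x + ((k : ℝ) + 1) := add_pos hx.1 k.cast_add_one_pos
    exact (hasDerivAt_gaussBranch hpos.ne').hasDerivWithinAt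
  · exact fun i j hij => (pairwise_disjoint_image_gaussBranch hij).mono
      (image_mono Ioo_subset_Ico_self) (image_mono Ioo_subset_Ico_self)

end GaussBranch

/-- The `k`-th summand of `(L_s h)(x)`, indexed from `0`, where `L_s` is the transfer operator of
the Gauss map. -/
noncomputable def transferSummand (s : ℂ) (h : ℝ → ℂ) (k : ℕ) (x : ℝ) : ℂ :=
  ((x + ((k : ℝ) + 1) : ℝ) : ℂ) ^ (-(2 * s)) * h (gaussBranch k x)

section TransferSummand

variable {s : ℂ} {f h : ℝ → ℂ} {C x : ℝ}

theorem inv_sq_mul_one_div_cpow (s : ℂ) {t : ℝ} (ht : 0 < t) :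
    ((t : ℂ) ^ 2)⁻¹ * ((1 / t : ℝ) : ℂ) ^ (2 * s - 2) = (t : ℂ) ^ (-(2 * s)) := by
  have hne : (t : ℂ) ≠ 0 := by exact_mod_cast ht.ne'
  have harg : (t : ℂ).arg ≠ Real.pi := by
    rw [Complex.arg_ofReal_of_nonneg ht.le]
    exact Real.pi_ne_zero.symm
  rw [one_div, Complex.ofReal_inv, Complex.inv_cpow _ _ harg, ← Complex.cpow_ofNat,
    ← Complex.cpow_neg, ← Complex.cpow_neg, ← Complex.cpow_add _ _ hne]
  congr 1
  ring

theorem inv_sq_smul_gaussBranch_eq_mul_transferSummand (s : ℂ) (f h : ℝ → ℂ) (k : ℕ)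
    (hx : x ∈ Ico (0 : ℝ) 1) :
    ((x + ((k : ℝ) + 1)) ^ 2)⁻¹ • (f (gaussMap (gaussBranch k x)) *
        ((gaussBranch k x : ℂ) ^ (2 * s - 2) * h (gaussBranch k x)))
      = f x * transferSummand s h k x := by
  have hpos : 0 < x + ((k : ℝ) + 1) := add_pos_of_nonneg_of_pos hx.1 k.cast_add_one_pos
  rw [gaussMap_gaussBranch hx, transferSummand, ← inv_sq_mul_one_div_cpow s hpos, ← gaussBranch,
    Complex.real_smul, Complex.ofReal_inv, Complex.ofReal_pow]
  ring

theorem norm_transferSummand_le (hs : 0 ≤ s.re) (hC : ∀ x ∈ Ioo (0 : ℝ) 1, ‖h x‖ ≤ C)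
    (k : ℕ) (hx : 0 < x) :
    ‖transferSummand s h k x‖ ≤ ((k : ℝ) + 1) ^ (-(2 * s.re)) * C := by
  have hk : (0 : ℝ) < (k : ℝ) + 1 := k.cast_add_one_pos
  have hcpow : ‖((x + ((k : ℝ) + 1) : ℝ) : ℂ) ^ (-(2 * s))‖ ≤ ((k : ℝ) + 1) ^ (-(2 * s.re)) := by
    rw [Complex.norm_cpow_eq_rpow_re_of_pos (add_pos hx hk),
      show (-(2 * s)).re = -(2 * s.re) by simp]
    exact Real.rpow_le_rpow_of_nonpos hk (by linarith) (by linarith)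
  rw [transferSummand, norm_mul]
  exact mul_le_mul hcpow (hC _ (gaussBranch_mem_Ioo hx)) (norm_nonneg _) (by positivity)

theorem summable_nat_add_one_rpow {p : ℝ} (hp : p < -1) :
    Summable fun k : ℕ => ((k : ℝ) + 1) ^ p := by
  simpa only [Nat.cast_add_one] using (summable_nat_add_iff 1).2 (Real.summable_nat_rpow.2 hp)

theorem summable_norm_transferSummand (hs : 1 / 2 < s.re)
    (hC : ∀ x ∈ Ioo (0 : ℝ) 1, ‖h x‖ ≤ C) (hx : 0 < x) :
    Summable fun k => ‖transferSummand s h k x‖ :=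
  .of_nonneg_of_le (fun _ => norm_nonneg _)
    (fun k => norm_transferSummand_le (by linarith) hC k hx)
    ((summable_nat_add_one_rpow (by linarith)).mul_right C)

theorem aestronglyMeasurable_transferSummand
    (hh : AEStronglyMeasurable h (volume.restrict (Ioo 0 1))) (s : ℂ) (k : ℕ) :
    AEStronglyMeasurable (transferSummand s h k) (volume.restrict (Ioo 0 1)) := by
  have hcpow : Measurable fun x : ℝ => ((x + ((k : ℝ) + 1) : ℝ) : ℂ) ^ (-(2 * s)) := by fun_prop
  exact hcpow.aestronglyMeasurable.mul
    (hh.comp_quasiMeasurePreserving (quasiMeasurePreserving_gaussBranch k))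

theorem integrableOn_mul_transferSummand (hs : 0 ≤ s.re) (hf : IntegrableOn f (Ioo 0 1))
    (hh : AEStronglyMeasurable h (volume.restrict (Ioo 0 1)))
    (hC : ∀ x ∈ Ioo (0 : ℝ) 1, ‖h x‖ ≤ C) (k : ℕ) :
    IntegrableOn (fun x => f x * transferSummand s h k x) (Ioo 0 1) :=
  Integrable.mul_bdd hf (aestronglyMeasurable_transferSummand hh s k)
    (ae_restrict_of_forall_mem measurableSet_Ioo fun _ hx => norm_transferSummand_le hs hC k hx.1)

theorem summable_setIntegral_norm_mul_transferSummand (hs : 1 / 2 < s.re)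
    (hf : IntegrableOn f (Ioo 0 1)) (hh : AEStronglyMeasurable h (volume.restrict (Ioo 0 1)))
    (hC : ∀ x ∈ Ioo (0 : ℝ) 1, ‖h x‖ ≤ C) :
    Summable fun k => ∫ x in Ioo (0 : ℝ) 1, ‖f x * transferSummand s h k x‖ := by
  have hs0 : 0 ≤ s.re := by linarith
  refine .of_nonneg_of_le (fun _ => integral_nonneg fun _ => norm_nonneg _) (fun k => ?_)
    (((summable_nat_add_one_rpow (p := -(2 * s.re)) (by linarith)).mul_right C).mul_left
      (∫ x in Ioo (0 : ℝ) 1, ‖f x‖))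
  rw [← integral_mul_const]
  refine setIntegral_mono_on (integrableOn_mul_transferSummand hs0 hf hh hC k).norm
    (hf.norm.mul_const _) measurableSet_Ioo fun x hx => ?_
  rw [norm_mul]
  gcongr
  exact norm_transferSummand_le hs0 hC k hx.1

end TransferSummand

theorem transfer_operator_duality_general {s : ℂ} (hs : 1 / 2 < s.re) {f h : ℝ → ℂ}
    (hf : IntegrableOn f (Ioo 0 1)) (hh : AEStronglyMeasurable h (volume.restrict (Ioo 0 1)))
    (hhb : ∃ C : ℝ, ∀ x ∈ Ioo (0 : ℝ) 1, ‖h x‖ ≤ C) :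
    (∀ x ∈ Ioo (0 : ℝ) 1, Summable fun k => ‖transferSummand s h k x‖) ∧
    ∫ x in Ioo (0 : ℝ) 1, f x * ∑' k, transferSummand s h k x
      = ∫ x in Ioo (0 : ℝ) 1, f (gaussMap x) * ((x : ℂ) ^ (2 * s - 2) * h x) := by
  obtain ⟨C, hC⟩ := hhb
  refine ⟨fun x hx => summable_norm_transferSummand hs hC hx.1, ?_⟩
  let g (x : ℝ) : ℂ := f (gaussMap x) * ((x : ℂ) ^ (2 * s - 2) * h x)
  have hpullback (k : ℕ) : EqOn (fun x => ((x + ((k : ℝ) + 1)) ^ 2)⁻¹ • g (gaussBranch k x))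
      (fun x => f x * transferSummand s h k x) (Ioo 0 1) := fun x hx =>
    inv_sq_smul_gaussBranch_eq_mul_transferSummand s f h k (Ioo_subset_Ico_self hx)
  have hint (k : ℕ) :
      IntegrableOn (fun x => ((x + ((k : ℝ) + 1)) ^ 2)⁻¹ • g (gaussBranch k x)) (Ioo 0 1) :=
    (integrableOn_congr_fun (hpullback k) measurableSet_Ioo).2
      (integrableOn_mul_transferSummand (by linarith) hf hh hC k)
  have hsum : Summable fun k : ℕ =>
      ∫ x in Ioo (0 : ℝ) 1, ‖((x + ((k : ℝ) + 1)) ^ 2)⁻¹ • g (gaussBranch k x)‖ :=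
    (summable_setIntegral_norm_mul_transferSummand hs hf hh hC).congr fun k =>
      setIntegral_congr_fun measurableSet_Ioo fun x hx => congrArg norm (hpullback k hx).symm
  calc ∫ x in Ioo (0 : ℝ) 1, f x * ∑' k, transferSummand s h k x
      = ∫ x in Ioo (0 : ℝ) 1, ∑' k, f x * transferSummand s h k x := by simp only [tsum_mul_left]
    _ = ∫ x in Ioo (0 : ℝ) 1, ∑' k : ℕ, ((x + ((k : ℝ) + 1)) ^ 2)⁻¹ • g (gaussBranch k x) :=
        setIntegral_congr_fun measurableSet_Ioo fun x hx =>
          tsum_congr fun k => (hpullback k hx).symm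
    _ = ∫ x in Ioo (0 : ℝ) 1, g x := setIntegral_tsum_inv_sq_smul_gaussBranch hint hsum

/-- **Duality of the transfer operator `L_s` with the Gauss shift on densities.**
For `Re s > 1/2` and bounded measurable `f, h` on `(0,1)`, the series
`(L_s h)(x) = ∑_{k≥1} (x+k)^{-2s} h(1/(x+k))` converges absolutely for every `x ∈ (0,1)`,
and `∫₀¹ f · L_s h dx = ∫₀¹ (f ∘ T) · x^{2s-2} · h dx`. -/
theorem transfer_operator_duality (s : ℂ) (hs : 1 / 2 < s.re)
    (f h : ℝ → ℂ) (hfm : Measurable f) (hhm : Measurable h)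
    (hfb : ∃ C : ℝ, ∀ x ∈ Ioo (0 : ℝ) 1, ‖f x‖ ≤ C)
    (hhb : ∃ C : ℝ, ∀ x ∈ Ioo (0 : ℝ) 1, ‖h x‖ ≤ C) :
    (∀ x ∈ Ioo (0 : ℝ) 1, Summable fun k : ℕ =>
      ‖((x + ((k : ℝ) + 1) : ℝ) : ℂ) ^ (-(2 * s)) * h (1 / (x + ((k : ℝ) + 1)))‖) ∧
    ∫ x in Ioo (0 : ℝ) 1,
        f x * ∑' k : ℕ, ((x + ((k : ℝ) + 1) : ℝ) : ℂ) ^ (-(2 * s)) *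
          h (1 / (x + ((k : ℝ) + 1)))
      = ∫ x in Ioo (0 : ℝ) 1,
          f (gaussMap x) * (((x : ℝ) : ℂ) ^ (2 * s - 2) * h x) := by
  obtain ⟨A, hA⟩ := hfb
  exact transfer_operator_duality_general hs (Measure.integrableOn_of_bounded (by simp)
    hfm.aestronglyMeasurable (ae_restrict_of_forall_mem measurableSet_Ioo hA))
    hhm.aestronglyMeasurable hhb
end

section
/- Let x, y ∈ (0,1) be irrational real numbers. Then there exist natural numbers m, n with T^m(x) = T^n(y) (where T^m denotes the m-fold iterate of the Gauss map) if and only if there exist integers a, b, c, d with |ad − bc| = 1, cx + d ≠ 0, and y = (ax + b)/(cx + d). In other words, the equivalence relation on irrational numbers generated by the Gauss shift coincides with equivalence under the fractional-linear action of GL(2,ℤ). -/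
/-!
`GL(2, ℤ)` acts on the projective line `ℝ ∪ {∞}`, and `gaussMap x` is the image of `x` under
`[[-⌊1/x⌋, 1], [1, 0]]`, so orbits of the Gauss map that meet lie in one orbit of `GL(2, ℤ)`.

Conversely, `GL(2, ℤ)` is generated by `x ↦ x + 1`, `x ↦ -x` and `x ↦ -1/x`, so it suffices that
each of these moves `x` to a point whose Gauss orbit meets that of `x`. This follows from
`gaussMap x⁻¹ = fract x`, together with `gaussMap (gaussMap (1 - t)) = gaussMap t` for
`0 < t < 1/2` to handle the change of sign. The rationals cause no trouble: their Gauss orbits all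
end at `0`, and together with `∞` they form a single orbit of `GL(2, ℤ)`.
-/

open Matrix Matrix.SpecialLinearGroup ModularGroup MulAction
open scoped OnePoint MatrixGroups

section OrbitsMeet

variable {α : Type*} {f : α → α} {x y z : α}

/-- The forward orbits of `x` and `y` under `f` have a point in common, possibly reached after
different numbers of steps. This is the equivalence relation generated by `x ∼ f x`. -/
def OrbitsMeet (f : α → α) (x y : α) : Prop :=
  ∃ m n : ℕ, f^[m] x = f^[n] y

namespace OrbitsMeet

lemma refl (f : α → α) (x : α) : OrbitsMeet f x x := ⟨0, 0, rfl⟩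

lemma symm (h : OrbitsMeet f x y) : OrbitsMeet f y x :=
  let ⟨m, n, h⟩ := h
  ⟨n, m, h.symm⟩

lemma trans (hxy : OrbitsMeet f x y) (hyz : OrbitsMeet f y z) : OrbitsMeet f x z := by
  obtain ⟨m, n, hxy⟩ := hxy
  obtain ⟨p, q, hyz⟩ := hyz
  refine ⟨p + m, n + q, ?_⟩
  calc f^[p + m] x = f^[p] (f^[n] y) := by rw [Function.iterate_add_apply, hxy]
    _ = f^[n] (f^[p] y) := Function.Commute.iterate_iterate_self f p n y
    _ = f^[n + q] z := by rw [hyz, Function.iterate_add_apply]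

lemma rel_of_forall_rel_apply {r : Setoid α} (hr : ∀ x, r x (f x)) (h : OrbitsMeet f x y) :
    r x y := by
  have rel_iterate (n : ℕ) (x : α) : r x (f^[n] x) := by
    induction n generalizing x with
    | zero => exact r.refl x
    | succ n ih => exact r.trans (hr x) (ih (f x))
  obtain ⟨m, n, h⟩ := h
  exact r.trans (h ▸ rel_iterate m x) (r.symm (rel_iterate n y))

end OrbitsMeet

end OrbitsMeet

section GaussMap

lemma gaussMap_eq_fract_inv (x : ℝ) : gaussMap x = Int.fract x⁻¹ := by
  rw [gaussMap, one_div, Int.self_sub_floor]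

lemma gaussMap_one_sub {t : ℝ} (ht₀ : 0 ≤ t) (ht : t < 1 / 2) :
    gaussMap (1 - t) = t / (1 - t) := by
  have hpos : 0 < 1 - t := by linarith
  have hinv : (1 - t)⁻¹ = t / (1 - t) + 1 := by field_simp; ring
  rw [gaussMap_eq_fract_inv, hinv, Int.fract_add_one, Int.fract_eq_self]
  exact ⟨by positivity, (div_lt_one hpos).2 (by linarith)⟩

lemma gaussMap_gaussMap_one_sub {t : ℝ} (ht₀ : 0 < t) (ht : t < 1 / 2) :
    gaussMap (gaussMap (1 - t)) = gaussMap t := by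
  have hinv : (t / (1 - t))⁻¹ = t⁻¹ - 1 := by field_simp
  rw [gaussMap_one_sub ht₀.le ht, gaussMap_eq_fract_inv, hinv, Int.fract_sub_one,
    gaussMap_eq_fract_inv]

lemma orbitsMeet_gaussMap_inv_fract (x : ℝ) : OrbitsMeet gaussMap x⁻¹ (Int.fract x) :=
  ⟨1, 0, by simp [gaussMap_eq_fract_inv]⟩

lemma orbitsMeet_gaussMap_one_sub {t : ℝ} (ht₀ : 0 < t) (ht₁ : t < 1) :
    OrbitsMeet gaussMap t (1 - t) := by
  rcases lt_trichotomy t (1 / 2) with hlt | rfl | hgt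
  · exact ⟨1, 2, (gaussMap_gaussMap_one_sub ht₀ hlt).symm⟩
  · norm_num [OrbitsMeet.refl]
  · refine ⟨2, 1, ?_⟩
    simpa using gaussMap_gaussMap_one_sub (t := 1 - t) (by linarith) (by linarith)

lemma orbitsMeet_gaussMap_fract_neg (x : ℝ) :
    OrbitsMeet gaussMap (Int.fract x) (Int.fract (-x)) := by
  by_cases hx : Int.fract x = 0
  · rw [hx, Int.fract_neg_eq_zero.2 hx]
    exact .refl gaussMap 0
  · rw [Int.fract_neg hx]
    exact orbitsMeet_gaussMap_one_sub ((Int.fract_nonneg x).lt_of_ne' hx) (Int.fract_lt_one x)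

lemma orbitsMeet_gaussMap_neg (x : ℝ) : OrbitsMeet gaussMap x (-x) := by
  have hpos := orbitsMeet_gaussMap_inv_fract x⁻¹
  have hneg := orbitsMeet_gaussMap_inv_fract (-x⁻¹)
  rw [inv_neg, inv_inv] at hneg
  rw [inv_inv] at hpos
  exact (hpos.trans (orbitsMeet_gaussMap_fract_neg x⁻¹)).trans hneg.symm

lemma orbitsMeet_gaussMap_inv_of_pos {x : ℝ} (hx : 0 < x) : OrbitsMeet gaussMap x x⁻¹ := by
  have of_lt_one {t : ℝ} (ht₀ : 0 < t) (ht₁ : t < 1) : OrbitsMeet gaussMap t t⁻¹ := by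
    simpa only [Int.fract_eq_self.2 ⟨ht₀.le, ht₁⟩] using (orbitsMeet_gaussMap_inv_fract t).symm
  rcases lt_trichotomy x 1 with hlt | rfl | hgt
  · exact of_lt_one hx hlt
  · simpa using OrbitsMeet.refl gaussMap 1
  · simpa using (of_lt_one (inv_pos.2 hx) (inv_lt_one_of_one_lt₀ hgt)).symm

lemma orbitsMeet_gaussMap_inv (x : ℝ) : OrbitsMeet gaussMap x x⁻¹ := by
  rcases lt_trichotomy x 0 with hneg | rfl | hpos
  · have h := orbitsMeet_gaussMap_inv_of_pos (neg_pos.2 hneg)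
    rw [inv_neg] at h
    exact ((orbitsMeet_gaussMap_neg x).trans h).trans (orbitsMeet_gaussMap_neg x⁻¹).symm
  · simpa using OrbitsMeet.refl gaussMap 0
  · exact orbitsMeet_gaussMap_inv_of_pos hpos

lemma orbitsMeet_gaussMap_fract (x : ℝ) : OrbitsMeet gaussMap x (Int.fract x) :=
  (orbitsMeet_gaussMap_inv x).trans (orbitsMeet_gaussMap_inv_fract x)

lemma orbitsMeet_gaussMap_add_one (x : ℝ) : OrbitsMeet gaussMap x (x + 1) :=
  (orbitsMeet_gaussMap_fract x).trans (by simpa using (orbitsMeet_gaussMap_fract (x + 1)).symm)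

end GaussMap

section Generators

/-- The matrix `diag(-1, 1)`, acting on the projective line by `x ↦ -x`. -/
def signChange : GL (Fin 2) ℤ where
  val := !![-1, 0; 0, 1]
  inv := !![-1, 0; 0, 1]
  val_inv := by simp [one_fin_two]
  inv_val := by simp [one_fin_two]

lemma det_signChange : signChange.det = -1 := by
  ext; simp [signChange]

lemma closure_toGL_S_toGL_T_signChange :
    Subgroup.closure {toGL S, toGL T, signChange} = (⊤ : Subgroup (GL (Fin 2) ℤ)) := by
  set H : Subgroup (GL (Fin 2) ℤ) := Subgroup.closure {toGL S, toGL T, signChange}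
  have mem_of_det_eq_one {g : GL (Fin 2) ℤ} (hg : g.det = 1) : g ∈ H := by
    have range_le : (toGL : SL(2, ℤ) →* GL (Fin 2) ℤ).range ≤ H := by
      rw [MonoidHom.range_eq_map, ← SpecialLinearGroup.SL2Z_generators, MonoidHom.map_closure,
        Set.image_pair]
      exact Subgroup.closure_mono (by grind)
    exact range_le (range_toGL.ge hg)
  have signChange_mem : signChange ∈ H := Subgroup.subset_closure (by simp)
  refine (Subgroup.eq_top_iff' H).2 fun g ↦ ?_
  rcases Int.units_eq_one_or g.det with hg | hg
  · exact mem_of_det_eq_one hg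
  · exact (H.mul_mem_cancel_left signChange_mem).1
      (mem_of_det_eq_one (by rw [map_mul, det_signChange, hg]; rfl))

end Generators

section ProjectiveLine

/-- The retraction of the projective line onto `K` that sends `∞` to `0`. With the convention
`0⁻¹ = 0` it intertwines inversion on the projective line with `x ↦ x⁻¹` on `K`. -/
def finitePart {K : Type*} [Zero K] (p : OnePoint K) : K := p.elim 0 id

lemma finitePart_coe {K : Type*} [Zero K] (x : K) : finitePart (x : OnePoint K) = x := rfl

variable {K : Type*} [Field K] [DecidableEq K]

/-- The action of `GL(2, ℤ)` on the projective line over `K` by fractional-linear maps, obtained by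
casting the entries of the matrix to `K`. -/
instance glIntAction : MulAction (GL (Fin 2) ℤ) (OnePoint K) :=
  MulAction.compHom _ (GeneralLinearGroup.map (Int.castRingHom K))

lemma glInt_smul_def (g : GL (Fin 2) ℤ) (p : OnePoint K) :
    g • p = GeneralLinearGroup.map (Int.castRingHom K) g • p := rfl

lemma glInt_smul_coe (g : GL (Fin 2) ℤ) (x : K) :
    g • (x : OnePoint K) =
      if (g 1 0 : K) * x + g 1 1 = 0 then ∞
      else ↑(((g 0 0 : K) * x + g 0 1) / ((g 1 0 : K) * x + g 1 1)) := by
  simp [glInt_smul_def, OnePoint.smul_some_eq_ite]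

lemma glInt_smul_infty (g : GL (Fin 2) ℤ) :
    g • (∞ : OnePoint K) = if (g 1 0 : K) = 0 then ∞ else ↑((g 0 0 : K) / g 1 0) := by
  simp [glInt_smul_def, OnePoint.smul_infty_eq_ite]

lemma coe_mem_orbit_coe_iff {x y : K} :
    (y : OnePoint K) ∈ orbit (GL (Fin 2) ℤ) (x : OnePoint K) ↔
      ∃ a b c d : ℤ, |a * d - b * c| = 1 ∧ (c : K) * x + d ≠ 0 ∧
        y = ((a : K) * x + b) / ((c : K) * x + d) := by
  constructor
  · rintro ⟨g, hg : g • (x : OnePoint K) = y⟩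
    have hdet : |g 0 0 * g 1 1 - g 0 1 * g 1 0| = 1 := by
      rw [← det_fin_two]
      exact Int.isUnit_iff_abs_eq.1 g.det.isUnit
    rw [glInt_smul_coe] at hg
    split_ifs at hg with hden
    · exact absurd hg (OnePoint.infty_ne_coe y)
    · exact ⟨g 0 0, g 0 1, g 1 0, g 1 1, hdet, hden, (OnePoint.coe_injective hg).symm⟩
  · rintro ⟨a, b, c, d, hdet, hden, rfl⟩
    have hunit : IsUnit !![a, b; c, d].det := by
      rw [det_fin_two_of]
      exact Int.isUnit_iff_abs_eq.2 hdet
    refine ⟨GeneralLinearGroup.mk'' !![a, b; c, d] hunit, ?_⟩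
    simp [glInt_smul_coe, GeneralLinearGroup.mk'', nonsingInvUnit, hden]

lemma finitePart_toGL_S_smul (p : OnePoint K) : finitePart (toGL S • p) = -(finitePart p)⁻¹ := by
  cases p with
  | infty => simp [finitePart, glInt_smul_infty, coe_S]
  | coe x => by_cases hx : x = 0 <;> simp [finitePart, glInt_smul_coe, coe_S, hx, neg_div]

lemma finitePart_signChange_smul (p : OnePoint K) :
    finitePart (signChange • p) = -finitePart p := by
  cases p <;> simp [finitePart, glInt_smul_infty, glInt_smul_coe, signChange]

lemma toGL_T_smul_infty : toGL T • (∞ : OnePoint K) = ∞ := by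
  simp [glInt_smul_infty, coe_T]

lemma toGL_T_smul_coe (x : K) : toGL T • (x : OnePoint K) = ↑(x + 1) := by
  simp [glInt_smul_coe, coe_T]

end ProjectiveLine

lemma orbitsMeet_gaussMap_finitePart_smul (g : GL (Fin 2) ℤ) (p : OnePoint ℝ) :
    OrbitsMeet gaussMap (finitePart p) (finitePart (g • p)) := by
  have hg : g ∈ Subgroup.closure {toGL S, toGL T, signChange} := by
    simp [closure_toGL_S_toGL_T_signChange]
  induction hg using Subgroup.closure_induction generalizing p with
  | mem g hg =>
    rcases hg with rfl | rfl | rfl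
    · rw [finitePart_toGL_S_smul]
      exact (orbitsMeet_gaussMap_inv _).trans (orbitsMeet_gaussMap_neg _)
    · cases p with
      | infty => rw [toGL_T_smul_infty]; exact .refl _ _
      | coe x => rw [toGL_T_smul_coe]; exact orbitsMeet_gaussMap_add_one x
    · rw [finitePart_signChange_smul]
      exact orbitsMeet_gaussMap_neg _
  | one => simpa using OrbitsMeet.refl gaussMap (finitePart p)
  | mul g h _ _ ihg ihh => simpa only [mul_smul] using (ihh p).trans (ihg (h • p))
  | inv g _ ih => simpa using (ih (g⁻¹ • p)).symm

lemma coe_gaussMap_mem_orbit_coe (x : ℝ) :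
    (gaussMap x : OnePoint ℝ) ∈ orbit (GL (Fin 2) ℤ) (x : OnePoint ℝ) := by
  by_cases hx : x = 0
  · simp [hx, gaussMap]
  · refine coe_mem_orbit_coe_iff.2 ⟨-⌊1 / x⌋, 1, 1, 0, by simp, by simpa using hx, ?_⟩
    rw [gaussMap, div_sub' hx]
    push_cast
    ring

theorem orbitsMeet_gaussMap_iff_mem_orbit {x y : ℝ} :
    OrbitsMeet gaussMap x y ↔ (y : OnePoint ℝ) ∈ orbit (GL (Fin 2) ℤ) (x : OnePoint ℝ) := by
  constructor
  · intro h
    let r : Setoid ℝ := (orbitRel (GL (Fin 2) ℤ) (OnePoint ℝ)).comap (↑)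
    have hr (x : ℝ) : r x (gaussMap x) := mem_orbit_symm.1 (coe_gaussMap_mem_orbit_coe x)
    exact mem_orbit_symm.1 (h.rel_of_forall_rel_apply hr)
  · rintro ⟨g, hg : g • (x : OnePoint ℝ) = y⟩
    simpa only [hg, finitePart_coe] using orbitsMeet_gaussMap_finitePart_smul g x

theorem gauss_shift_equiv_GL2Z_general (x y : ℝ) :
    (∃ m n : ℕ, gaussMap^[m] x = gaussMap^[n] y) ↔
    (∃ a b c d : ℤ, |a * d - b * c| = 1 ∧ (c : ℝ) * x + d ≠ 0 ∧
      y = ((a : ℝ) * x + b) / ((c : ℝ) * x + d)) :=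
  orbitsMeet_gaussMap_iff_mem_orbit.trans coe_mem_orbit_coe_iff

/-- **The equivalence relation generated by the Gauss shift is the `GL(2,ℤ)` fractional-linear
equivalence.** For irrational `x, y ∈ (0,1)`: some iterates of the Gauss map agree,
`T^[m] x = T^[n] y`, if and only if `y = (ax+b)/(cx+d)` for some integers `a,b,c,d` with
`|ad - bc| = 1` and `cx + d ≠ 0`. -/
theorem gauss_shift_equiv_GL2Z (x y : ℝ)
    (hx : x ∈ Set.Ioo (0 : ℝ) 1) (hy : y ∈ Set.Ioo (0 : ℝ) 1)
    (hxi : Irrational x) (hyi : Irrational y) :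
    (∃ m n : ℕ, gaussMap^[m] x = gaussMap^[n] y) ↔
    (∃ a b c d : ℤ, |a * d - b * c| = 1 ∧ (c : ℝ) * x + d ≠ 0 ∧
      y = ((a : ℝ) * x + b) / ((c : ℝ) * x + d)) :=
  gauss_shift_equiv_GL2Z_general x y
end

section
/- Let θ, θ' be irrational real numbers and let τ, τ' be complex numbers with nonzero imaginary part. Let P = ℤ + ℤθ + ℤτ and P' = ℤ + ℤθ' + ℤτ' be the corresponding subgroups of ℂ. Then there exists a nonzero complex number λ with λ·P = P' (i.e. the ℂ-linear map z ↦ λz carries P onto P') if and only if there exist integers a, b, c, d, e, f with |ad − bc| = 1 such that θ' = (aθ + b)/(cθ + d) and τ' = (τ + eθ + f)/(cθ + d). -/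
/-!
Rescaling `P` so that it equals `P'` amounts to finding `μ ≠ 0` and `A ∈ GL₃(ℤ)` with
`μ • (1, θ', τ') = A • (1, θ, τ)`. The first two rows express `μ` and `μθ'` in terms of `1, θ, τ`;
their imaginary parts are integer multiples of `Im τ` whose ratio would be `θ'`, so both vanish by
irrationality. Hence `A` is block triangular, its last diagonal entry `k` and the upper left
`2 × 2` minor are units, and replacing `(μ, A)` by `(kμ, kA)` makes the last diagonal entry `1`.
The rows of the resulting matrix are then exactly the formulas for `μ = cθ + d`, `θ'` and `τ'`.
-/

open Submodule
open scoped Matrix.Module Pointwise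

section Span

variable {ι R M : Type*} [Fintype ι] [DecidableEq ι] [AddCommGroup M]

lemma span_range_le_span_range_iff_exists_matrix [Ring R] [Module R M] {v w : ι → M} :
    span R (Set.range w) ≤ span R (Set.range v) ↔ ∃ A : Matrix ι ι R, w = A • v := by
  simp only [span_le, Set.range_subset_iff, SetLike.mem_coe, mem_span_range_iff_exists_fun]
  constructor
  · intro h
    choose A hA using h
    exact ⟨Matrix.of A, funext fun i => (hA i).symm⟩
  · rintro ⟨A, rfl⟩ i
    exact ⟨A i, rfl⟩

lemma matrix_smul_left_injective_of_linearIndependent [Ring R] [Module R M] {v : ι → M}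
    (hv : LinearIndependent R v) : Function.Injective fun A : Matrix ι ι R => A • v := by
  intro A B hAB
  ext i j
  exact congrFun (hv.fintypeLinearCombination_injective (congrFun hAB i)) j

lemma span_range_eq_span_range_iff_exists_isUnit [CommRing R] [Module R M] {v w : ι → M}
    (hv : LinearIndependent R v) :
    span R (Set.range v) = span R (Set.range w) ↔
      ∃ A : Matrix ι ι R, IsUnit A ∧ w = A • v := by
  constructor
  · intro h
    obtain ⟨A, hA⟩ := span_range_le_span_range_iff_exists_matrix.1 h.ge
    obtain ⟨B, hB⟩ := span_range_le_span_range_iff_exists_matrix.1 h.le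
    have hBA : B * A = 1 := by
      apply matrix_smul_left_injective_of_linearIndependent hv
      simp only [mul_smul, ← hA, ← hB, one_smul]
    exact ⟨A, .of_mul_eq_one_right B hBA, hA⟩
  · rintro ⟨A, ⟨u, rfl⟩, hw⟩
    refine le_antisymm ?_ (span_range_le_span_range_iff_exists_matrix.2 ⟨_, hw⟩)
    refine span_range_le_span_range_iff_exists_matrix.2 ⟨↑u⁻¹, ?_⟩
    rw [hw, ← mul_smul, u.inv_mul, one_smul]

end Span

lemma intCast_add_intCast_mul_eq_zero_iff {x : ℝ} (hx : Irrational x) {p q : ℤ} :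
    (p : ℝ) + q * x = 0 ↔ p = 0 ∧ q = 0 := by
  refine ⟨fun h => ?_, by rintro ⟨rfl, rfl⟩; simp⟩
  have hq : q = 0 := by
    by_contra hq
    exact ((hx.intCast_mul hq).intCast_add p).ne_zero h
  exact ⟨by simpa [hq] using h, hq⟩

/-- The generators `1, θ, τ` of the CR-lattice `P_{θ,τ}`, as a family indexed by `Fin 3` so that
integer `3 × 3` matrices act on it. -/
def crBasis (θ : ℝ) (τ : ℂ) : Fin 3 → ℂ := ![1, θ, τ]

/-- The CR-lattice `P_{θ,τ} = ℤ + ℤθ + ℤτ`, as a `ℤ`-submodule of `ℂ`. No condition on `θ` and `τ`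
is built in. -/
def crLattice (θ : ℝ) (τ : ℂ) : Submodule ℤ ℂ := span ℤ (Set.range (crBasis θ τ))

/-- The integer matrix that takes `(1, θ, τ)` to `(cθ + d, aθ + b, τ + eθ + f)`. -/
def crMatrix (a b c d e f : ℤ) : Matrix (Fin 3) (Fin 3) ℤ := !![d, c, 0; b, a, 0; f, e, 1]

lemma isUnit_crMatrix_iff {a b c d e f : ℤ} :
    IsUnit (crMatrix a b c d e f) ↔ |a * d - b * c| = 1 := by
  rw [Matrix.isUnit_iff_isUnit_det, ← Int.isUnit_iff_abs_eq, crMatrix, Matrix.det_fin_three]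
  simp [mul_comm]

section CRLattice

variable {θ θ' : ℝ} {τ τ' μ : ℂ} {A : Matrix (Fin 3) (Fin 3) ℤ}

lemma coe_crLattice (θ : ℝ) (τ : ℂ) :
    (crLattice θ τ : Set ℂ) = {z | ∃ m n k : ℤ, z = (m : ℂ) + n * θ + k * τ} := by
  ext z
  rw [crLattice, SetLike.mem_coe, mem_span_range_iff_exists_fun]
  simp [crBasis, Fin.sum_univ_three, Fin.exists_fin_succ_pi, eq_comm]

lemma image_mul_crLattice_eq_iff {lam : ℂ} :
    (fun z => lam * z) '' (crLattice θ τ : Set ℂ) = crLattice θ' τ' ↔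
      lam • crLattice θ τ = crLattice θ' τ' :=
  SetLike.coe_set_eq (p := lam • crLattice θ τ)

lemma linearIndependent_crBasis (hθ : Irrational θ) (hτ : τ.im ≠ 0) :
    LinearIndependent ℤ (crBasis θ τ) := by
  rw [Fintype.linearIndependent_iff]
  intro g hg
  have hsum : (g 0 : ℂ) + g 1 * θ + g 2 * τ = 0 := by
    simpa [Fin.sum_univ_three, crBasis] using hg
  have h₂ : g 2 = 0 := by simpa [hτ] using congrArg Complex.im hsum
  have hre : (g 0 : ℝ) + g 1 * θ = 0 := by simpa [h₂] using congrArg Complex.re hsum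
  obtain ⟨h₀, h₁⟩ := (intCast_add_intCast_mul_eq_zero_iff hθ).1 hre
  simp [Fin.forall_fin_succ, h₀, h₁, h₂]

lemma smul_crBasis_eq_matrix_smul_iff :
    μ • crBasis θ' τ' = A • crBasis θ τ ↔
      μ = A 0 0 + A 0 1 * θ + A 0 2 * τ ∧
      μ * θ' = A 1 0 + A 1 1 * θ + A 1 2 * τ ∧
      μ * τ' = A 2 0 + A 2 1 * θ + A 2 2 * τ := by
  simp [funext_iff, Fin.forall_fin_succ, Fin.sum_univ_three, crBasis]

lemma exists_smul_crLattice_eq_iff (hθ : Irrational θ) (hτ : τ.im ≠ 0) :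
    (∃ lam : ℂ, lam ≠ 0 ∧ lam • crLattice θ τ = crLattice θ' τ') ↔
      ∃ μ : ℂ, μ ≠ 0 ∧ ∃ A : Matrix (Fin 3) (Fin 3) ℤ,
        IsUnit A ∧ μ • crBasis θ' τ' = A • crBasis θ τ := by
  have smul_crLattice (μ : ℂ) :
      μ • crLattice θ' τ' = span ℤ (Set.range (μ • crBasis θ' τ')) := by
    rw [crLattice, smul_span, Set.smul_set_range]
    rfl
  simp only [← span_range_eq_span_range_iff_exists_isUnit (linearIndependent_crBasis hθ hτ),
    ← smul_crLattice]
  constructor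
  · rintro ⟨lam, hlam, h⟩
    refine ⟨lam⁻¹, inv_ne_zero hlam, ?_⟩
    rw [← h, inv_smul_smul₀ hlam]
    rfl
  · rintro ⟨μ, hμ, h⟩
    refine ⟨μ⁻¹, inv_ne_zero hμ, ?_⟩
    rw [crLattice, h, inv_smul_smul₀ hμ]

lemma upper_last_column_eq_zero_of_smul_crBasis_eq (hθ' : Irrational θ') (hτ : τ.im ≠ 0)
    (h : μ • crBasis θ' τ' = A • crBasis θ τ) : A 0 2 = 0 ∧ A 1 2 = 0 := by
  obtain ⟨hμ, hμθ', -⟩ := smul_crBasis_eq_matrix_smul_iff.1 h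
  have him : μ.im = A 0 2 * τ.im := by simpa using congrArg Complex.im hμ
  have him' : μ.im * θ' = A 1 2 * τ.im := by simpa using congrArg Complex.im hμθ'
  have hrel : ((-A 1 2 : ℤ) : ℝ) + A 0 2 * θ' = 0 := by
    apply mul_right_cancel₀ hτ
    push_cast
    linear_combination him' - θ' * him
  obtain ⟨h₁₂, h₀₂⟩ := (intCast_add_intCast_mul_eq_zero_iff hθ').1 hrel
  exact ⟨h₀₂, neg_eq_zero.1 h₁₂⟩

lemma exists_smul_eq_crMatrix (hA : IsUnit A) (h₀₂ : A 0 2 = 0) (h₁₂ : A 1 2 = 0) :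
    ∃ k : ℤ, IsUnit k ∧ ∃ a b c d e f : ℤ, k • A = crMatrix a b c d e f := by
  have hdet : A.det = (A 0 0 * A 1 1 - A 0 1 * A 1 0) * A 2 2 := by
    rw [Matrix.det_fin_three, h₀₂, h₁₂]
    ring
  have hk : IsUnit (A 2 2) :=
    isUnit_of_mul_isUnit_right (hdet ▸ (Matrix.isUnit_iff_isUnit_det A).1 hA)
  refine ⟨A 2 2, hk, A 2 2 * A 1 1, A 2 2 * A 1 0, A 2 2 * A 0 1, A 2 2 * A 0 0, A 2 2 * A 2 1,
    A 2 2 * A 2 0, ?_⟩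
  ext i j
  fin_cases i <;> fin_cases j <;> simp [crMatrix, h₀₂, h₁₂, Int.isUnit_mul_self hk]

lemma exists_matrix_iff_exists_crMatrix (hθ' : Irrational θ') (hτ : τ.im ≠ 0) :
    (∃ μ : ℂ, μ ≠ 0 ∧ ∃ A : Matrix (Fin 3) (Fin 3) ℤ,
      IsUnit A ∧ μ • crBasis θ' τ' = A • crBasis θ τ) ↔
    ∃ μ : ℂ, μ ≠ 0 ∧ ∃ a b c d e f : ℤ,
      |a * d - b * c| = 1 ∧ μ • crBasis θ' τ' = crMatrix a b c d e f • crBasis θ τ := by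
  constructor
  · rintro ⟨μ, hμ, A, hA, h⟩
    obtain ⟨h₀₂, h₁₂⟩ := upper_last_column_eq_zero_of_smul_crBasis_eq hθ' hτ h
    obtain ⟨k, hk, a, b, c, d, e, f, hkA⟩ := exists_smul_eq_crMatrix hA h₀₂ h₁₂
    refine ⟨k • μ, smul_ne_zero hk.ne_zero hμ, a, b, c, d, e, f, ?_, ?_⟩
    · rw [← isUnit_crMatrix_iff (e := e) (f := f), ← hkA]
      exact hA.smul hk.unit
    · rw [← hkA, smul_assoc, smul_assoc, h]
  · rintro ⟨μ, hμ, a, b, c, d, e, f, hdet, h⟩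
    exact ⟨μ, hμ, _, isUnit_crMatrix_iff.2 hdet, h⟩

lemma smul_crBasis_eq_crMatrix_smul_iff (hμ : μ ≠ 0) {a b c d e f : ℤ} :
    μ • crBasis θ' τ' = crMatrix a b c d e f • crBasis θ τ ↔
      μ = c * θ + d ∧ θ' = (a * θ + b) / (c * θ + d) ∧
      τ' = (τ + e * θ + f) / (c * θ + d) := by
  have rows : μ • crBasis θ' τ' = crMatrix a b c d e f • crBasis θ τ ↔
      μ = c * θ + d ∧ μ * θ' = a * θ + b ∧ μ * τ' = τ + e * θ + f := by
    simp [smul_crBasis_eq_matrix_smul_iff, crMatrix, add_assoc, add_comm]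
  rw [rows, ← Complex.ofReal_inj]
  push_cast
  refine and_congr_right fun h => ?_
  rw [← h, eq_div_iff hμ, eq_div_iff hμ, mul_comm μ, mul_comm μ]

lemma intCast_mul_add_intCast_ne_zero_of_abs_det (hθ : Irrational θ) {a b c d : ℤ}
    (hdet : |a * d - b * c| = 1) : (c * θ + d : ℂ) ≠ 0 := by
  intro h
  have hreal : (d : ℝ) + c * θ = 0 := by
    rw [add_comm]
    exact_mod_cast h
  obtain ⟨rfl, rfl⟩ := (intCast_add_intCast_mul_eq_zero_iff hθ).1 hreal
  simp at hdet

end CRLattice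

/-- **Classification of isomorphisms of CR-lattices.**
Let `P = ℤ + ℤθ + ℤτ` and `P' = ℤ + ℤθ' + ℤτ'` in `ℂ`, with `θ, θ'` irrational reals and
`Im τ, Im τ' ≠ 0`. There is a nonzero `λ ∈ ℂ` with `λ·P = P'` if and only if there are
integers `a,b,c,d,e,f` with `|ad - bc| = 1`, `θ' = (aθ+b)/(cθ+d)` and
`τ' = (τ + eθ + f)/(cθ + d)`. -/
theorem cr_lattice_iso_iff (θ θ' : ℝ) (hθ : Irrational θ) (hθ' : Irrational θ')
    (τ τ' : ℂ) (hτ : τ.im ≠ 0) (hτ' : τ'.im ≠ 0) :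
    (∃ lam : ℂ, lam ≠ 0 ∧
      (fun z => lam * z) ''
          {z : ℂ | ∃ m n k : ℤ, z = (m : ℂ) + (n : ℂ) * (θ : ℂ) + (k : ℂ) * τ}
        = {z : ℂ | ∃ m n k : ℤ, z = (m : ℂ) + (n : ℂ) * (θ' : ℂ) + (k : ℂ) * τ'}) ↔
    (∃ a b c d e f : ℤ, |a * d - b * c| = 1 ∧
      θ' = ((a : ℝ) * θ + b) / ((c : ℝ) * θ + d) ∧
      τ' = (τ + (e : ℂ) * (θ : ℂ) + (f : ℂ)) / ((c : ℂ) * (θ : ℂ) + (d : ℂ))) := by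
  simp only [← coe_crLattice, image_mul_crLattice_eq_iff]
  rw [exists_smul_crLattice_eq_iff hθ hτ, exists_matrix_iff_exists_crMatrix hθ' hτ]
  constructor
  · rintro ⟨μ, hμ, a, b, c, d, e, f, hdet, h⟩
    exact ⟨a, b, c, d, e, f, hdet, ((smul_crBasis_eq_crMatrix_smul_iff hμ).1 h).2⟩
  · rintro ⟨a, b, c, d, e, f, hdet, h⟩
    have hμ := intCast_mul_add_intCast_ne_zero_of_abs_det hθ hdet
    exact ⟨_, hμ, a, b, c, d, e, f, hdet, (smul_crBasis_eq_crMatrix_smul_iff hμ).2 ⟨rfl, h⟩⟩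
end
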